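/- Let B be a separable stable C*-algebra and P, Q ∈ M(B) projections with P ∼ 1 (Murray–von Neumann equivalence in M(B)) and P − Q ∈ B. Then Q ∼ 1. -/

import Mathlib

open scoped MultiplierAlgebra

/-- The spectral projection `1_{≥0}(x)` of a self-adjoint element onto `[0, ∞)`,
obtained by applying the indicator function of `[0, ∞)` via the continuous
functional calculus. -/
noncomputable def posSpectralProj {C : Type*} [CStarAlgebra C] (x : C) : C :=
  cfc (fun t : ℝ => if 0 ≤ t then (1 : ℝ) else 0) x

/-- `x ∈ 𝓜(ℂ, B)` belongs to (the canonical image of) the ideal `B` of its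
multiplier algebra. -/
def inCanonicalIdeal {B : Type*} [NonUnitalCStarAlgebra B] (x : 𝓜(ℂ, B)) : Prop :=
  ∃ b : B, (b : 𝓜(ℂ, B)) = x

/-- Murray–von Neumann equivalence of projections. -/
def MvNEquiv {C : Type*} [Mul C] [Star C] (p q : C) : Prop :=
  ∃ v : C, star v * v = p ∧ v * star v = q

/-- `B` is a stable C*-algebra, encoded via the standard characterization (for σ-unital,
in particular separable, `B`): the multiplier algebra `𝓜(ℂ, B)` contains a sequence of
isometries with pairwise orthogonal ranges whose range projections sum to `1` strictly. -/
def IsStable (B : Type*) [NonUnitalCStarAlgebra B] : Prop :=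
  ∃ s : ℕ → 𝓜(ℂ, B),
    (∀ n, star (s n) * s n = 1) ∧
    (∀ m n, m ≠ n → star (s m) * s n = 0) ∧
    ∀ b : B, Filter.Tendsto
      (fun N : ℕ => (∑ n ∈ Finset.range N, s n * star (s n)) * (b : 𝓜(ℂ, B)))
      Filter.atTop (nhds (b : 𝓜(ℂ, B)))

/-!
Compressing an element of `B` by the isometries `sₙ` that witness stability makes it small in
norm, because `∑ sₙ sₙ*` converges strictly. Since `P - R ∈ B`, an isometry `w` with range below
`P` can be moved below `R`: `R w sₙ` is nearly isometric for large `n`, and polar decomposition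
corrects it to an isometry.

Once `R` dominates the range of an isometry `w`, put `q = R - w w*`. The Hilbert hotel isometry
`∑ (sₙ₊₁ q + sₙ (1 - q)) sₙ*` has range projection `1 - s₀ q s₀*`, so
`R = w w* + q ∼ (1 - s₀ q s₀*) + s₀ q s₀* = 1`.
-/

open Filter Topology

section MurrayVonNeumann

theorem MvNEquiv.trans {A : Type*} [Semigroup A] [StarMul A] {p q r : A}
    (hp : IsIdempotentElem p) (hr : IsIdempotentElem r) (hpq : MvNEquiv p q)
    (hqr : MvNEquiv q r) : MvNEquiv p r := by
  obtain ⟨v, hvp, hvq⟩ := hpq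
  obtain ⟨u, huq, hur⟩ := hqr
  refine ⟨u * v, ?_, ?_⟩
  · calc star (u * v) * (u * v) = star v * (star u * u) * v := by simp only [star_mul, mul_assoc]
      _ = (star v * v) * (star v * v) := by rw [huq, ← hvq]; simp only [mul_assoc]
      _ = p := by rw [hvp, hp.eq]
  · calc u * v * star (u * v) = u * (v * star v) * star u := by simp only [star_mul, mul_assoc]
      _ = (u * star u) * (u * star u) := by rw [hvq, ← huq]; simp only [mul_assoc]
      _ = r := by rw [hur, hr.eq]

theorem MvNEquiv.exists_mul_eq {A : Type*} [Semigroup A] [StarMul A] {p q : A}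
    (hp : IsIdempotentElem p) (hq : IsIdempotentElem q) (hpq : MvNEquiv p q) :
    ∃ v : A, star v * v = p ∧ v * star v = q ∧ v * p = v ∧ q * v = v := by
  obtain ⟨v, rfl, rfl⟩ := hpq
  have hp' : star v * (v * (star v * v)) = star v * v := by simpa only [mul_assoc] using hp.eq
  have hq' : v * (star v * (v * star v)) = v * star v := by simpa only [mul_assoc] using hq.eq
  refine ⟨v * (star v * v), ?_, ?_, ?_, ?_⟩ <;>
    simp only [star_mul, star_star, mul_assoc, hp', hq']

theorem MvNEquiv.add {A : Type*} [NonUnitalSemiring A] [StarRing A] {p p' q q' : A}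
    (hp : IsIdempotentElem p) (hp' : IsIdempotentElem p')
    (hq : IsIdempotentElem q) (hq' : IsIdempotentElem q')
    (hpp' : MvNEquiv p p') (hqq' : MvNEquiv q q') (hpq : p * q = 0) (hpq' : p' * q' = 0) :
    MvNEquiv (p + q) (p' + q') := by
  obtain ⟨v, hvp, hvp', hv, hv'⟩ := hpp'.exists_mul_eq hp hp'
  obtain ⟨u, huq, huq', hu, hu'⟩ := hqq'.exists_mul_eq hq hq'
  have star_p' : star p' = p' := by simp [← hvp']
  have star_q : star q = q := by simp [← huq]
  have star_v_mul_u : star v * u = 0 := by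
    rw [← hv', ← hu', star_mul, star_p', mul_assoc, ← mul_assoc p', hpq', zero_mul, mul_zero]
  have v_mul_star_u : v * star u = 0 := by
    rw [← hv, ← hu, star_mul, star_q, mul_assoc, ← mul_assoc p, hpq, zero_mul, mul_zero]
  have star_u_mul_v : star u * v = 0 := by simpa using congrArg star star_v_mul_u
  have u_mul_star_v : u * star v = 0 := by simpa using congrArg star v_mul_star_u
  refine ⟨v + u, ?_, ?_⟩
  · simp only [star_add, add_mul, mul_add, hvp, huq, star_v_mul_u, star_u_mul_v, add_zero, zero_add]
  · simp only [star_add, add_mul, mul_add, hvp', huq', v_mul_star_u, u_mul_star_v, add_zero,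
      zero_add]

theorem isStarProjection_conj_of_isometry {A : Type*} [Monoid A] [StarMul A] {s p : A}
    (hs : star s * s = 1) (hp : IsStarProjection p) : IsStarProjection (s * p * star s) where
  isIdempotentElem := by
    calc s * p * star s * (s * p * star s) = s * p * (star s * s) * p * star s := by
          simp only [mul_assoc]
      _ = s * p * star s := by rw [hs, mul_one, mul_assoc s, hp.isIdempotentElem.eq]
  isSelfAdjoint := hp.isSelfAdjoint.conjugate s

theorem mvnEquiv_conj_of_isometry {A : Type*} [Monoid A] [StarMul A] {s p : A}
    (hs : star s * s = 1) (hp : IsStarProjection p) : MvNEquiv p (s * p * star s) := by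
  refine ⟨s * p, ?_, ?_⟩
  · rw [star_mul, hp.isSelfAdjoint.star_eq, mul_assoc, ← mul_assoc (star s), hs, one_mul,
      hp.isIdempotentElem.eq]
  · rw [star_mul, hp.isSelfAdjoint.star_eq, mul_assoc, ← mul_assoc p, hp.isIdempotentElem.eq,
      mul_assoc]

end MurrayVonNeumann

/-- A family of isometries with pairwise orthogonal ranges. -/
structure OrthogonalIsometries {ι A : Type*} [MulZeroOneClass A] [Star A] (s : ι → A) : Prop where
  star_mul_self : ∀ i, star (s i) * s i = 1
  star_mul_of_ne : ∀ i j, i ≠ j → star (s i) * s j = 0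

theorem OrthogonalIsometries.star_mul_eq_ite {ι A : Type*} [DecidableEq ι] [MulZeroOneClass A]
    [Star A] {s : ι → A} (hs : OrthogonalIsometries s) (i j : ι) :
    star (s i) * s j = if i = j then 1 else 0 := by
  split_ifs with h
  · rw [h, hs.star_mul_self]
  · exact hs.star_mul_of_ne i j h

theorem OrthogonalIsometries.star_sum_mul_sum {ι A : Type*} [Semiring A] [StarRing A]
    {t : ι → A} (ht : OrthogonalIsometries t) (s : ι → A) (I : Finset ι) :
    star (∑ i ∈ I, t i * star (s i)) * ∑ i ∈ I, t i * star (s i) =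
      ∑ i ∈ I, s i * star (s i) := by
  classical
  rw [star_sum, Finset.sum_mul]
  refine Finset.sum_congr rfl fun i hi => ?_
  calc star (t i * star (s i)) * ∑ j ∈ I, t j * star (s j)
      = ∑ j ∈ I, s i * (star (t i) * t j) * star (s j) := by
        simp only [Finset.mul_sum, star_mul, star_star, mul_assoc]
    _ = s i * star (s i) := by simp [ht.star_mul_eq_ite, hi]

/-- The partial sums `∑_{n < N} tₙ sₙ*`; for orthogonal isometries, a partial isometry carrying
the range of `sₙ` onto that of `tₙ` for each `n < N`. -/
def sumMulStar {A : Type*} [NonUnitalNonAssocSemiring A] [Star A] (t s : ℕ → A) (N : ℕ) : A :=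
  ∑ n ∈ Finset.range N, t n * star (s n)

theorem star_sumMulStar {A : Type*} [NonUnitalSemiring A] [StarRing A] (t s : ℕ → A) (N : ℕ) :
    star (sumMulStar t s N) = sumMulStar s t N := by
  simp only [sumMulStar, star_sum, star_mul, star_star]

theorem OrthogonalIsometries.star_sumMulStar_mul_self {A : Type*} [Semiring A] [StarRing A]
    {t : ℕ → A} (ht : OrthogonalIsometries t) (s : ℕ → A) (N : ℕ) :
    star (sumMulStar t s N) * sumMulStar t s N = sumMulStar s s N :=
  ht.star_sum_mul_sum s _

theorem OrthogonalIsometries.star_sumMulStar_sub_mul_self {A : Type*} [Ring A] [StarRing A]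
    {t : ℕ → A} (ht : OrthogonalIsometries t) (s : ℕ → A) {m n : ℕ} (hmn : m ≤ n) :
    star (sumMulStar t s n - sumMulStar t s m) * (sumMulStar t s n - sumMulStar t s m) =
      sumMulStar s s n - sumMulStar s s m := by
  simpa only [sumMulStar, ← Finset.sum_Ico_eq_sub _ hmn] using
    ht.star_sum_mul_sum s (Finset.Ico m n)

section HilbertHotel

variable {A : Type*} [Ring A]

/-- The `n`-th isometry of the Hilbert hotel: the part of the `n`-th copy below `q` moves on to
the copy `n + 1`, and the rest stays. -/
def hotelShift (s : ℕ → A) (q : A) (n : ℕ) : A :=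
  s (n + 1) * q + s n * (1 - q)

variable [StarRing A]

theorem orthogonalIsometries_hotelShift {s : ℕ → A} (hs : OrthogonalIsometries s) {q : A}
    (hq : IsStarProjection q) : OrthogonalIsometries (hotelShift s q) := by
  have star_mul_shift (m n : ℕ) :
      star (hotelShift s q m) * hotelShift s q n = if m = n then 1 else 0 := by
    calc star (hotelShift s q m) * hotelShift s q n
        = q * (star (s (m + 1)) * s (n + 1)) * q + q * (star (s (m + 1)) * s n) * (1 - q)
          + (1 - q) * (star (s m) * s (n + 1)) * q
          + (1 - q) * (star (s m) * s n) * (1 - q) := by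
          simp only [hotelShift, star_add, star_mul, hq.isSelfAdjoint.star_eq,
            hq.one_sub.isSelfAdjoint.star_eq]
          noncomm_ring
      _ = if m = n then 1 else 0 := by
          simp only [hs.star_mul_eq_ite, mul_ite, ite_mul, mul_one, mul_zero, zero_mul,
            hq.mul_one_sub_self, hq.one_sub_mul_self, ite_self, add_zero,
            hq.isIdempotentElem.eq, hq.one_sub.isIdempotentElem.eq, Nat.add_right_cancel_iff]
          split_ifs <;> simp
  exact ⟨fun n => by simp [star_mul_shift], fun m n hmn => by simp [star_mul_shift, hmn]⟩

theorem hotelShift_mul_star (s : ℕ → A) {q : A} (hq : IsStarProjection q) (n : ℕ) :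
    hotelShift s q n * star (hotelShift s q n) =
      s n * star (s n) + (s (n + 1) * q * star (s (n + 1)) - s n * q * star (s n)) := by
  calc hotelShift s q n * star (hotelShift s q n)
      = s (n + 1) * (q * q) * star (s (n + 1)) + s (n + 1) * (q * (1 - q)) * star (s n)
        + s n * ((1 - q) * q) * star (s (n + 1))
        + s n * ((1 - q) * (1 - q)) * star (s n) := by
        simp only [hotelShift, star_add, star_mul, hq.isSelfAdjoint.star_eq,
          hq.one_sub.isSelfAdjoint.star_eq]
        noncomm_ring
    _ = s n * star (s n) + (s (n + 1) * q * star (s (n + 1)) - s n * q * star (s n)) := by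
        rw [hq.mul_one_sub_self, hq.one_sub_mul_self, hq.isIdempotentElem.eq,
          hq.one_sub.isIdempotentElem.eq]
        noncomm_ring

theorem sumMulStar_hotelShift (s : ℕ → A) {q : A} (hq : IsStarProjection q) (N : ℕ) :
    sumMulStar (hotelShift s q) (hotelShift s q) N =
      sumMulStar s s N + (s N * q * star (s N) - s 0 * q * star (s 0)) := by
  simp only [sumMulStar, hotelShift_mul_star s hq, Finset.sum_add_distrib]
  rw [Finset.sum_range_sub fun n => s n * q * star (s n)]

end HilbertHotel

section CStarRing

variable {ι A : Type*} [LinearOrder ι] [NonUnitalNormedRing A] [StarRing A] [CStarRing A]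
  {x e : ι → A}

theorem norm_mul_sub_mul_sq_le (hxe : ∀ m n, m ≤ n → star (x n - x m) * (x n - x m) = e n - e m)
    (m n : ι) (b : A) : ‖x n * b - x m * b‖ ^ 2 ≤ ‖b‖ * ‖e n * b - e m * b‖ := by
  wlog hmn : m ≤ n generalizing m n
  · simpa only [norm_sub_rev] using this n m (le_of_not_ge hmn)
  calc ‖x n * b - x m * b‖ ^ 2 = ‖star b * (star (x n - x m) * (x n - x m) * b)‖ := by
        rw [sq, ← CStarRing.norm_star_mul_self, ← sub_mul, star_mul]
        simp only [mul_assoc]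
    _ ≤ ‖b‖ * ‖e n * b - e m * b‖ := by
        rw [hxe m n hmn, sub_mul, ← norm_star b]
        exact norm_mul_le _ _

theorem cauchySeq_mul_of_star_sub_mul_sub_eq [Nonempty ι]
    (hxe : ∀ m n, m ≤ n → star (x n - x m) * (x n - x m) = e n - e m) {b : A}
    (he : CauchySeq fun n => e n * b) : CauchySeq fun n => x n * b := by
  rw [cauchySeq_iff_tendsto_dist_atTop_0] at he ⊢
  have sqrt_tendsto := (he.const_mul ‖b‖).sqrt
  rw [mul_zero, Real.sqrt_zero] at sqrt_tendsto
  refine squeeze_zero (fun _ => dist_nonneg) (fun k => Real.le_sqrt_of_sq_le ?_) sqrt_tendsto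
  simpa only [dist_eq_norm] using norm_mul_sub_mul_sq_le hxe k.2 k.1 b

theorem norm_le_one_of_star_mul_self_eq_one {A : Type*} [NormedRing A] [StarRing A] [CStarRing A]
    {s : A} (hs : star s * s = 1) : ‖s‖ ≤ 1 := by
  have norm_sq_le : ‖s‖ * ‖s‖ ≤ 1 := by
    rw [← CStarRing.norm_star_mul_self, hs]
    exact IsStarProjection.norm_le 1 (.one A)
  nlinarith [norm_nonneg s]

end CStarRing

theorem exists_isometry_mul_of_norm_one_sub_lt_one {A : Type*} [CStarAlgebra A]
    {x : A} (hx : ‖1 - star x * x‖ < 1) : ∃ d : A, star (x * d) * (x * d) = 1 := by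
  let _ := CStarAlgebra.spectralOrder A
  let _ := CStarAlgebra.spectralOrderedRing A
  have isUnit_star_mul_self : IsUnit (star x * x) := by
    simpa using isUnit_one_sub_of_norm_lt_one hx
  have strictlyPositive : IsStrictlyPositive (star x * x) :=
    IsStrictlyPositive.iff_of_unital.mpr ⟨star_mul_self_nonneg x, isUnit_star_mul_self⟩
  let d : A := (star x * x) ^ (-(1 / 2) : ℝ)
  have star_d : star d = d := CFC.rpow_nonneg.isSelfAdjoint.star_eq
  refine ⟨d, ?_⟩
  calc star (x * d) * (x * d) = d * (star x * x) * d := by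
        simp only [star_mul, star_d, mul_assoc]
    _ = 1 := CFC.conjugate_rpow_neg_one_half _ strictlyPositive

section Multiplier

variable {B : Type*} [NonUnitalCStarAlgebra B]

theorem multiplier_eq_of_fst_eq {x y : 𝓜(ℂ, B)} (h : x.fst = y.fst) : x = y := by
  rw [← sub_eq_zero, ← norm_eq_zero, ← DoubleCentralizer.norm_fst, DoubleCentralizer.sub_fst, h,
    sub_self, norm_zero]

theorem multiplier_fst_mul (x : 𝓜(ℂ, B)) (b c : B) : x.fst (b * c) = x.fst b * c := by
  have mul_sub_eq_zero (d : B) : d * (x.fst (b * c) - x.fst b * c) = 0 := by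
    rw [mul_sub, ← x.central, ← mul_assoc, ← mul_assoc, ← x.central, sub_self]
  rw [← sub_eq_zero, ← CStarRing.star_mul_self_eq_zero_iff]
  exact mul_sub_eq_zero _

theorem multiplier_mul_coe (x : 𝓜(ℂ, B)) (b : B) :
    x * (b : 𝓜(ℂ, B)) = ((x.fst b : B) : 𝓜(ℂ, B)) :=
  multiplier_eq_of_fst_eq <| ContinuousLinearMap.ext <| multiplier_fst_mul x b

theorem multiplier_isometry_coe : Isometry (fun b : B => (b : 𝓜(ℂ, B))) := by
  refine AddMonoidHomClass.isometry_of_norm (DoubleCentralizer.coeHom (𝕜 := ℂ) (A := B))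
    fun b => ?_
  rw [← DoubleCentralizer.norm_fst]
  exact ContinuousLinearMap.opNorm_mul_apply ℂ B b

theorem multiplier_coe_star (b : B) : ((star b : B) : 𝓜(ℂ, B)) = star (b : 𝓜(ℂ, B)) :=
  map_star (DoubleCentralizer.coeHom (𝕜 := ℂ) (A := B)) b

theorem multiplier_eq_of_mul_coe_eq {x y : 𝓜(ℂ, B)}
    (h : ∀ b : B, x * (b : 𝓜(ℂ, B)) = y * (b : 𝓜(ℂ, B))) : x = y := by
  refine multiplier_eq_of_fst_eq <| ContinuousLinearMap.ext fun b => ?_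
  apply multiplier_isometry_coe.injective
  simpa only [multiplier_mul_coe] using h b

theorem multiplier_eq_of_star_coe_mul_mul_coe_eq {x y : 𝓜(ℂ, B)}
    (h : ∀ b c : B, star (c : 𝓜(ℂ, B)) * x * (b : 𝓜(ℂ, B)) =
      star (c : 𝓜(ℂ, B)) * y * (b : 𝓜(ℂ, B))) : x = y := by
  refine multiplier_eq_of_mul_coe_eq fun b => ?_
  rw [← sub_eq_zero, ← sub_mul, ← CStarRing.star_mul_self_eq_zero_iff]
  nth_rewrite 1 [multiplier_mul_coe]
  rw [← mul_assoc, mul_sub, sub_mul, h, sub_self]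

theorem inCanonicalIdeal.mul_mul {z : 𝓜(ℂ, B)} (hz : inCanonicalIdeal z) (x y : 𝓜(ℂ, B)) :
    inCanonicalIdeal (x * z * y) := by
  obtain ⟨b, rfl⟩ := hz
  refine ⟨star ((star y).fst (star (x.fst b))), ?_⟩
  rw [multiplier_coe_star, ← multiplier_mul_coe, multiplier_coe_star, ← multiplier_mul_coe,
    star_mul, star_star, star_star]

/-- Strong convergence of multipliers of `B`, acting on `B` by left multiplication. Strict
convergence is strong convergence of both `x` and `star x`. -/
def TendstoStrongly {ι : Type*} (x : ι → 𝓜(ℂ, B)) (l : Filter ι) (y : 𝓜(ℂ, B)) : Prop :=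
  ∀ b : B, Tendsto (fun i => x i * (b : 𝓜(ℂ, B))) l (𝓝 (y * (b : 𝓜(ℂ, B))))

namespace TendstoStrongly

variable {ι : Type*} {l : Filter ι} {x x' : ι → 𝓜(ℂ, B)} {y y' : 𝓜(ℂ, B)}

theorem const (y : 𝓜(ℂ, B)) (l : Filter ι) : TendstoStrongly (fun _ => y) l y :=
  fun _ => tendsto_const_nhds

theorem add (hx : TendstoStrongly x l y) (hx' : TendstoStrongly x' l y') :
    TendstoStrongly (fun i => x i + x' i) l (y + y') := fun b => by
  simpa only [add_mul] using (hx b).add (hx' b)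

theorem sub (hx : TendstoStrongly x l y) (hx' : TendstoStrongly x' l y') :
    TendstoStrongly (fun i => x i - x' i) l (y - y') := fun b => by
  simpa only [sub_mul] using (hx b).sub (hx' b)

theorem bounded_mul_zero {a : ι → 𝓜(ℂ, B)} {C : ℝ} (ha : ∀ i, ‖a i‖ ≤ C)
    (hx : TendstoStrongly x l 0) : TendstoStrongly (fun i => a i * x i) l 0 := fun b => by
  simpa only [mul_assoc, zero_mul] using
    isBoundedUnder_le_mul_tendsto_zero (isBoundedUnder_of ⟨C, ha⟩) (by simpa using hx b)

theorem star_mul_self_eq [l.NeBot] {e : 𝓜(ℂ, B)} (hx : TendstoStrongly x l y)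
    (he : TendstoStrongly (fun i => star (x i) * x i) l e) : star y * y = e := by
  refine multiplier_eq_of_star_coe_mul_mul_coe_eq fun b c => ?_
  refine tendsto_nhds_unique (f := fun i => star (x i * (c : 𝓜(ℂ, B))) * (x i * b)) (l := l) ?_ ?_
  · simpa only [star_mul, mul_assoc] using (hx c).star.mul (hx b)
  · simpa only [star_mul, mul_assoc] using (he b).const_mul (star (c : 𝓜(ℂ, B)))

end TendstoStrongly

theorem exists_tendstoStrongly_of_cauchySeq {x : ℕ → 𝓜(ℂ, B)}
    (hx : ∀ b : B, CauchySeq fun n => x n * (b : 𝓜(ℂ, B)))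
    (hx' : ∀ b : B, CauchySeq fun n => star (x n) * (b : 𝓜(ℂ, B))) :
    ∃ y : 𝓜(ℂ, B), TendstoStrongly x atTop y ∧
      TendstoStrongly (fun n => star (x n)) atTop (star y) := by
  have exists_lim {z : ℕ → 𝓜(ℂ, B)} (hz : ∀ b : B, CauchySeq fun n => z n * (b : 𝓜(ℂ, B)))
      (b : B) : ∃ c : B, Tendsto (fun n => (z n).fst b) atTop (𝓝 c) := by
    apply cauchySeq_tendsto_of_complete
    apply multiplier_isometry_coe.isUniformInducing.cauchy_map_iff.mp
    simpa only [CauchySeq, multiplier_mul_coe, map_map, Function.comp_def] using hz b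
  choose f hf using exists_lim hx
  choose g hg using exists_lim hx'
  have hsnd (b : B) : Tendsto (fun n => (x n).snd b) atTop (𝓝 (star (g (star b)))) := by
    simpa using (hg (star b)).star
  let left : B →L[ℂ] B := continuousLinearMapOfTendsto _ (tendsto_pi_nhds.2 hf)
  let right : B →L[ℂ] B := continuousLinearMapOfTendsto _ (tendsto_pi_nhds.2 hsnd)
  have central (a b : B) : right a * b = a * left b :=
    tendsto_nhds_unique ((hsnd a).mul_const b) <| by
      simp only [DoubleCentralizer.central]
      exact (hf b).const_mul a
  refine ⟨⟨(left, right), central⟩, fun b => ?_, fun b => ?_⟩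
  · simp only [multiplier_mul_coe]
    exact (multiplier_isometry_coe.continuous.tendsto _).comp (hf b)
  · simp only [multiplier_mul_coe]
    exact (multiplier_isometry_coe.continuous.tendsto _).comp (hsnd (star b)).star

theorem OrthogonalIsometries.mvnEquiv_of_tendstoStrongly {s t : ℕ → 𝓜(ℂ, B)}
    (hs : OrthogonalIsometries s) (ht : OrthogonalIsometries t) {e f : 𝓜(ℂ, B)}
    (he : TendstoStrongly (sumMulStar s s) atTop e)
    (hf : TendstoStrongly (sumMulStar t t) atTop f) : MvNEquiv e f := by
  obtain ⟨y, hy, hy_star⟩ := exists_tendstoStrongly_of_cauchySeq (x := sumMulStar t s)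
    (fun b => cauchySeq_mul_of_star_sub_mul_sub_eq
      (fun _ _ => ht.star_sumMulStar_sub_mul_self s) (he b).cauchySeq)
    (fun b => by
      simpa only [star_sumMulStar] using cauchySeq_mul_of_star_sub_mul_sub_eq
        (fun _ _ => hs.star_sumMulStar_sub_mul_self t) (hf b).cauchySeq)
  refine ⟨y, hy.star_mul_self_eq ?_, ?_⟩
  · simpa only [ht.star_sumMulStar_mul_self] using he
  · have range_tendsto : TendstoStrongly
        (fun N => star (star (sumMulStar t s N)) * star (sumMulStar t s N)) atTop f := by
      simpa only [star_sumMulStar t s, hs.star_sumMulStar_mul_self] using hf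
    simpa only [star_star] using hy_star.star_mul_self_eq range_tendsto

section Stability

variable {s : ℕ → 𝓜(ℂ, B)}

theorem OrthogonalIsometries.tendstoStrongly_star_zero (hs : OrthogonalIsometries s)
    {e : 𝓜(ℂ, B)} (he : TendstoStrongly (sumMulStar s s) atTop e) :
    TendstoStrongly (fun n => star (s n)) atTop 0 := by
  have range_proj : TendstoStrongly (fun n => s n * star (s n)) atTop 0 := by
    have he_succ : TendstoStrongly (fun n => sumMulStar s s (n + 1)) atTop e :=
      fun b => (he b).comp (tendsto_add_atTop_nat 1)
    simpa only [sumMulStar, Finset.sum_range_succ, add_sub_cancel_left, sub_self] using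
      he_succ.sub he
  have norm_star_le (n : ℕ) : ‖star (s n)‖ ≤ 1 :=
    (norm_star _).trans_le (norm_le_one_of_star_mul_self_eq_one (hs.star_mul_self n))
  simpa only [← mul_assoc, hs.star_mul_self, one_mul] using
    TendstoStrongly.bounded_mul_zero norm_star_le range_proj

theorem OrthogonalIsometries.one_mvnEquiv_one_sub_conj (hs : OrthogonalIsometries s)
    (hsum : TendstoStrongly (sumMulStar s s) atTop 1) {q : 𝓜(ℂ, B)} (hq : IsStarProjection q) :
    MvNEquiv 1 (1 - s 0 * q * star (s 0)) := by
  refine hs.mvnEquiv_of_tendstoStrongly (orthogonalIsometries_hotelShift hs hq) hsum ?_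
  have norm_mul_le (n : ℕ) : ‖s n * q‖ ≤ 1 :=
    (norm_mul_le _ _).trans <| mul_le_one₀
      (norm_le_one_of_star_mul_self_eq_one (hs.star_mul_self n)) (norm_nonneg _)
      (IsStarProjection.norm_le q hq)
  have conj_zero : TendstoStrongly (fun n => s n * q * star (s n)) atTop 0 :=
    .bounded_mul_zero norm_mul_le (hs.tendstoStrongly_star_zero hsum)
  have sum_tendsto := hsum.add (conj_zero.sub (.const (s 0 * q * star (s 0)) atTop))
  simpa only [← sumMulStar_hotelShift s hq, zero_sub, ← sub_eq_add_neg] using sum_tendsto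

theorem OrthogonalIsometries.exists_isometry_mul_eq_of_sub_mem (hs : OrthogonalIsometries s)
    {e : 𝓜(ℂ, B)} (hsum : TendstoStrongly (sumMulStar s s) atTop e) {P R w : 𝓜(ℂ, B)}
    (hR : IsStarProjection R) (hPR : inCanonicalIdeal (P - R)) (hw : star w * w = 1)
    (hPw : P * w = w) : ∃ u : 𝓜(ℂ, B), star u * u = 1 ∧ R * u = u := by
  obtain ⟨c, hc⟩ := hPR.mul_mul (star w) w
  obtain ⟨n, hn⟩ : ∃ n, ‖star (s n) * (c : 𝓜(ℂ, B))‖ < 1 := by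
    have compress := hs.tendstoStrongly_star_zero hsum c
    rw [zero_mul] at compress
    exact (compress.norm.eventually_lt_const (by simp)).exists
  let x := R * w * s n
  have one_sub_eq : 1 - star x * x = star (s n) * (c : 𝓜(ℂ, B)) * s n := by
    calc 1 - star x * x
        = star (s n) * (star w * w) * s n - star (s n) * (star w * (R * R) * w) * s n := by
          simp only [x, star_mul, hR.isSelfAdjoint.star_eq, hw, mul_one, hs.star_mul_self,
            mul_assoc]
      _ = star (s n) * (star w * (P * w)) * s n - star (s n) * (star w * R * w) * s n := by
          rw [hPw, hR.isIdempotentElem.eq]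
      _ = star (s n) * (c : 𝓜(ℂ, B)) * s n := by rw [hc]; noncomm_ring
  have norm_lt : ‖1 - star x * x‖ < 1 := by
    rw [one_sub_eq]
    exact ((norm_mul_le _ _).trans <| mul_le_of_le_one_right (norm_nonneg _) <|
      norm_le_one_of_star_mul_self_eq_one (hs.star_mul_self n)).trans_lt hn
  obtain ⟨d, hd⟩ := exists_isometry_mul_of_norm_one_sub_lt_one norm_lt
  exact ⟨x * d, hd, by simp only [x, ← mul_assoc, hR.isIdempotentElem.eq]⟩

theorem OrthogonalIsometries.mvnEquiv_one_of_mul_isometry_eq (hs : OrthogonalIsometries s)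
    (hsum : TendstoStrongly (sumMulStar s s) atTop 1) {R w : 𝓜(ℂ, B)} (hR : IsStarProjection R)
    (hw : star w * w = 1) (hRw : R * w = w) : MvNEquiv R 1 := by
  have range_w : IsStarProjection (w * star w) := by
    simpa using isStarProjection_conj_of_isometry hw (.one _)
  let q := R - w * star w
  have hq : IsStarProjection q :=
    range_w.sub_of_mul_eq_right hR (by rw [← mul_assoc, hRw])
  have hr : IsStarProjection (s 0 * q * star (s 0)) :=
    isStarProjection_conj_of_isometry (hs.star_mul_self 0) hq
  have range_w_equiv : MvNEquiv (w * star w) (1 - s 0 * q * star (s 0)) :=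
    .trans range_w.isIdempotentElem hr.one_sub.isIdempotentElem
      ⟨star w, by rw [star_star], by rw [star_star, hw]⟩
      (hs.one_mvnEquiv_one_sub_conj hsum hq)
  have range_w_mul_q : w * star w * q = 0 := by
    have star_w_mul_R : star w * R = star w := by
      simpa [hR.isSelfAdjoint.star_eq] using congrArg star hRw
    rw [mul_sub, range_w.isIdempotentElem.eq, mul_assoc, star_w_mul_R, sub_self]
  have sum_equiv := range_w_equiv.add range_w.isIdempotentElem hr.one_sub.isIdempotentElem
    hq.isIdempotentElem hr.isIdempotentElem (mvnEquiv_conj_of_isometry (hs.star_mul_self 0) hq)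
    range_w_mul_q hr.one_sub_mul_self
  simpa only [q, add_sub_cancel, sub_add_cancel] using sum_equiv

end Stability

end Multiplier

theorem stmt17_general {B : Type*} [NonUnitalCStarAlgebra B] (hstable : IsStable B)
    {P R : 𝓜(ℂ, B)} (hR : IsStarProjection R) (hP1 : MvNEquiv P (1 : 𝓜(ℂ, B)))
    (hd : inCanonicalIdeal (P - R)) : MvNEquiv R (1 : 𝓜(ℂ, B)) := by
  obtain ⟨s, isometry, orthogonal, tendsto_one⟩ := hstable
  have hs : OrthogonalIsometries s := ⟨isometry, orthogonal⟩
  have hsum : TendstoStrongly (sumMulStar s s) atTop 1 := fun b => by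
    simpa only [sumMulStar, one_mul] using tendsto_one b
  obtain ⟨v, rfl, hv⟩ := hP1
  obtain ⟨w, hw, hRw⟩ := hs.exists_isometry_mul_eq_of_sub_mem hsum hR hd (w := star v)
    (by rw [star_star, hv]) (by rw [mul_assoc, hv, mul_one])
  exact hs.mvnEquiv_one_of_mul_isometry_eq hsum hR hw hRw

/-- Let `B` be a separable stable C*-algebra and `P, R ∈ M(B)` projections
with `P ∼ 1` (Murray–von Neumann equivalence in `M(B)`) and `P − R ∈ B`.  Then `R ∼ 1`. -/
theorem stmt17 {B : Type*} [NonUnitalCStarAlgebra B] [TopologicalSpace.SeparableSpace B]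
    (hstable : IsStable B)
    (P R : 𝓜(ℂ, B))
    (hPsa : IsSelfAdjoint P) (hPidem : IsIdempotentElem P)
    (hRsa : IsSelfAdjoint R) (hRidem : IsIdempotentElem R)
    (hP1 : MvNEquiv P (1 : 𝓜(ℂ, B)))
    (hd : inCanonicalIdeal (P - R)) :
    MvNEquiv R (1 : 𝓜(ℂ, B)) := by
  exact stmt17_general hstable ⟨hRidem, hRsa⟩ hP1 hd
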